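/- arXiv:1205.5468 — 2 statements merged into one kernel-verified Lean document; each statement's English description precedes it below -/
import Mathlib

section
/- Let f : ℝ → ℝ satisfy |f(x) − f(y)| ≤ Λ·|x − y| for all x, y, where Λ > 1, let x₀ be a fixed point of f, and let (c_k)_{k≥1} be a sequence with c_{k+1} = f(c_k) for all k ≥ 1. Let φ : ℝ → ℝ satisfy |φ(x) − φ(y)| ≤ L·|x − y| for all x, y, and suppose φ(x₀) = 1. Suppose δ > 0, m ≥ 1 are such that δ·Λ^m ≤ 1/2, and j₀ ≥ 1 is an index with |c_{j₀} − x₀| < δ. Then for every n with j₀ ≤ n ≤ j₀ + m one has |Σ_{k=1}^{n} φ(c_k)| ≥ (n − j₀ + 1) − L / (2·(1 − 1/Λ)) − |Σ_{k=1}^{j₀−1} φ(c_k)|. -/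
/-- Lower bound for a Birkhoff sum of `φ` along an orbit shadowing the fixed
point `x₀` where `φ x₀ = 1`. -/
theorem stmt_2 (f : ℝ → ℝ) (Λ : ℝ) (hΛ : 1 < Λ)
    (hf : ∀ x y : ℝ, |f x - f y| ≤ Λ * |x - y|)
    (x₀ : ℝ) (hfix : f x₀ = x₀)
    (c : ℕ → ℝ) (hc : ∀ k, 1 ≤ k → c (k + 1) = f (c k))
    (φ : ℝ → ℝ) (L : ℝ) (hφ : ∀ x y : ℝ, |φ x - φ y| ≤ L * |x - y|)
    (hφx₀ : φ x₀ = 1)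
    (δ : ℝ) (hδ : 0 < δ) (m : ℕ) (hm : 1 ≤ m) (hδm : δ * Λ ^ m ≤ 1 / 2)
    (j₀ : ℕ) (hj₀ : 1 ≤ j₀) (hclose : |c j₀ - x₀| < δ)
    (n : ℕ) (hn₁ : j₀ ≤ n) (hn₂ : n ≤ j₀ + m) :
    |∑ k ∈ Finset.Icc 1 n, φ (c k)| ≥
      ((n : ℝ) - j₀ + 1) - L / (2 * (1 - 1 / Λ)) -
        |∑ k ∈ Finset.Icc 1 (j₀ - 1), φ (c k)| := by
  have hL : 0 ≤ L := by
    have h := (abs_nonneg _).trans (hφ 1 0)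
    simpa using h
  obtain ⟨p, rfl⟩ := Nat.exists_eq_add_of_le hn₁
  have hpm : p ≤ m := by omega
  have hpos : 0 < Λ - 1 := by linarith
  have hd : ∀ i : ℕ, |c (j₀ + i) - x₀| ≤ δ * Λ ^ i := by
    intro i
    induction i with
    | zero => simpa using hclose.le
    | succ i ih =>
      have h1 := hf (c (j₀ + i)) x₀
      rw [hfix, ← hc (j₀ + i) (by omega)] at h1
      have h2 : Λ * |c (j₀ + i) - x₀| ≤ Λ * (δ * Λ ^ i) :=
        mul_le_mul_of_nonneg_left ih (by linarith)
      calc |c (j₀ + (i + 1)) - x₀| ≤ Λ * (δ * Λ ^ i) := h1.trans h2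
        _ = δ * Λ ^ (i + 1) := by ring
  have hφd : ∀ i : ℕ, 1 - L * (δ * Λ ^ i) ≤ φ (c (j₀ + i)) := by
    intro i
    have h1 := hφ (c (j₀ + i)) x₀
    rw [hφx₀] at h1
    have h2 := mul_le_mul_of_nonneg_left (hd i) hL
    have h3 := neg_abs_le (φ (c (j₀ + i)) - 1)
    linarith
  obtain ⟨K, hK⟩ : ∃ K, K = Λ / (Λ - 1) := ⟨_, rfl⟩
  have hK1 : K * Λ = K + Λ := by rw [hK]; field_simp; ring
  have hKge : 1 ≤ K := by rw [hK, le_div_iff₀ hpos]; linarith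
  have hS : ∀ q : ℕ, ∑ k ∈ Finset.Icc 1 (j₀ - 1), φ (c k) + (q + 1) - L * (δ * Λ ^ q * K)
      ≤ ∑ k ∈ Finset.Icc 1 (j₀ + q), φ (c k) := by
    intro q
    induction q with
    | zero =>
      obtain ⟨j, rfl⟩ := Nat.exists_eq_add_of_le' hj₀
      have h0 := hφd 0
      have h1 : L * δ * 1 ≤ L * δ * K := mul_le_mul_of_nonneg_left hKge (by positivity)
      simp only [add_zero, Nat.add_sub_cancel, pow_zero, Nat.cast_zero] at h0 ⊢
      rw [Finset.sum_Icc_succ_top (by omega)]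
      linarith
    | succ q ih =>
      have h0 := hφd (q + 1)
      rw [← add_assoc j₀ q 1] at h0 ⊢
      rw [Finset.sum_Icc_succ_top (by omega)]
      have h1 : L * (δ * Λ ^ (q + 1) * K) = L * (δ * Λ ^ q * K) + L * (δ * Λ ^ (q + 1)) := by
        rw [pow_succ]
        linear_combination L * δ * Λ ^ q * hK1
      push_cast
      linarith
  have hp : δ * Λ ^ p ≤ 1 / 2 :=
    (mul_le_mul_of_nonneg_left (pow_le_pow_right₀ hΛ.le hpm) hδ.le).trans hδm
  have hfin : L * (δ * Λ ^ p * K) ≤ L * (1 / 2 * K) :=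
    mul_le_mul_of_nonneg_left (mul_le_mul_of_nonneg_right hp (by linarith)) hL
  have hKe : L / (2 * (1 - 1 / Λ)) = L * (1 / 2 * K) := by
    have : Λ ≠ 0 := by linarith
    have h3 : 1 - 1 / Λ = (Λ - 1) / Λ := by field_simp
    rw [hK, h3]
    field_simp
  rw [hKe]
  have h1 := hS p
  have h2 := le_abs_self (∑ k ∈ Finset.Icc 1 (j₀ + p), φ (c k))
  have h3 := neg_abs_le (∑ k ∈ Finset.Icc 1 (j₀ - 1), φ (c k))
  push_cast
  linarith
end

section
/- Let f : ℝ → ℝ satisfy |f(x) − f(y)| ≤ Λ·|x − y| for all x, y, where Λ > 1, let x₀ be a fixed point of f, and let (c_k)_{k≥1} be a sequence with c_{k+1} = f(c_k) for all k ≥ 1. Let φ : ℝ → ℝ be Lipschitz with φ(x₀) = 1. If x₀ lies in the closure of the set {c_k : k ≥ 1}, then the sequence of Birkhoff sums (Σ_{k=1}^{n} φ(c_k))_{n≥1} is unbounded, i.e. for every D there exists n with |Σ_{k=1}^{n} φ(c_k)| > D. -/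
/-- If `φ` is Lipschitz with `φ x₀ = 1` at a fixed point `x₀` of `f` lying in
the closure of the orbit `{c k : k ≥ 1}`, then the Birkhoff sums of `φ` along
the orbit are unbounded. -/
theorem stmt_3 (f : ℝ → ℝ) (Λ : ℝ) (hΛ : 1 < Λ)
    (hf : ∀ x y : ℝ, |f x - f y| ≤ Λ * |x - y|)
    (x₀ : ℝ) (hfix : f x₀ = x₀)
    (c : ℕ → ℝ) (hc : ∀ k, 1 ≤ k → c (k + 1) = f (c k))
    (φ : ℝ → ℝ) (L : ℝ) (hφ : ∀ x y : ℝ, |φ x - φ y| ≤ L * |x - y|)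
    (hφx₀ : φ x₀ = 1)
    (hdense : x₀ ∈ closure {x : ℝ | ∃ k, 1 ≤ k ∧ c k = x}) :
    ∀ D : ℝ, ∃ n : ℕ, 1 ≤ n ∧ |∑ k ∈ Finset.Icc 1 n, φ (c k)| > D := by
  intro D
  by_contra! hcon
  have hL : 0 ≤ L := by
    have h := hφ 1 0
    have h2 := abs_nonneg (φ 1 - φ 0)
    norm_num at h
    linarith
  obtain ⟨M, hM⟩ := exists_nat_gt (4 * D)
  have hP : 0 < Λ ^ M := by positivity
  have hδ : 0 < 1 / (2 * (L + 1) * Λ ^ M) := by positivity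
  obtain ⟨_, ⟨j, hj, rfl⟩, hjd⟩ := Metric.mem_closure_iff.mp hdense _ hδ
  rw [dist_comm, Real.dist_eq] at hjd
  have horb : ∀ i : ℕ, |c (j + i) - x₀| ≤ Λ ^ i * |c j - x₀| := by
    intro i
    induction i with
    | zero => simp
    | succ i ih =>
      have h1 := hf (c (j + i)) x₀
      rw [hfix, ← hc (j + i) (by omega)] at h1
      calc |c (j + (i + 1)) - x₀| ≤ Λ * |c (j + i) - x₀| := h1
        _ ≤ Λ * (Λ ^ i * |c j - x₀|) := by gcongr
        _ = Λ ^ (i + 1) * |c j - x₀| := by ring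
  have hhalf : ∀ i : ℕ, i ≤ M → 1 / 2 ≤ φ (c (j + i)) := by
    intro i hi
    have h1 := hφ (c (j + i)) x₀
    rw [hφx₀] at h1
    have h2 : |c (j + i) - x₀| ≤ Λ ^ M * (1 / (2 * (L + 1) * Λ ^ M)) := by
      refine (horb i).trans ?_
      have := pow_le_pow_right₀ hΛ.le hi
      gcongr
    have h3 : Λ ^ M * (1 / (2 * (L + 1) * Λ ^ M)) = 1 / (2 * (L + 1)) := by
      field_simp
    rw [h3] at h2
    have h4 : L * |c (j + i) - x₀| ≤ 1 / 2 := by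
      calc L * |c (j + i) - x₀| ≤ (L + 1) * (1 / (2 * (L + 1))) := by
            gcongr
            linarith
        _ = 1 / 2 := by field_simp
    have h5 := (abs_le.mp (h1.trans h4)).1
    linarith
  have hsum : ∀ i : ℕ, i ≤ M → ∑ k ∈ Finset.Icc 1 j, φ (c k) + i / 2 ≤
      ∑ k ∈ Finset.Icc 1 (j + i), φ (c k) := by
    intro i
    induction i with
    | zero => simp
    | succ i ih =>
      intro hi
      rw [← add_assoc, Finset.sum_Icc_succ_top (by omega)]
      have h1 := ih (by omega)
      have h2 := hhalf (i + 1) hi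
      rw [← add_assoc] at h2
      push_cast
      linarith
  have h1 := hsum M le_rfl
  have h2 := (abs_le.mp (hcon j hj)).1
  have h3 := (abs_le.mp (hcon (j + M) (by omega))).2
  linarith
end
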